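/- M is a generalized stable model of an abduction framework ⟨T,A⟩ if and only if M is a stable model of some completion P ∈ Comp(T,∅,A) of the open program ⟨T,∅,A⟩. -/

import Mathlib

set_option autoImplicit false

namespace LP

/-- A first-order signature: function symbols (constants are 0-ary) and
predicate symbols, each with an arity. -/
structure Sig where
  Func : Type
  fArity : Func → ℕ
  Pred : Type
  pArity : Pred → ℕ

/-- First-order terms over signature `σ` with variables from `V`. -/
inductive Term (σ : Sig) (V : Type) : Type
  | var : V → Term σ V
  | app : (f : σ.Func) → (Fin (σ.fArity f) → Term σ V) → Term σ V

abbrev GroundTerm (σ : Sig) : Type := Term σ Empty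

/-- An atom `p(t₁,…,tₙ)`. -/
structure Atom (σ : Sig) (V : Type) : Type where
  pred : σ.Pred
  args : Fin (σ.pArity pred) → Term σ V

abbrev GroundAtom (σ : Sig) : Type := Atom σ Empty

/-- A normal rule `H ← A₁,…,Aₘ,¬B₁,…,¬Bₙ` (variables are natural numbers). -/
structure Rule (σ : Sig) : Type where
  head : Atom σ ℕ
  pos : List (Atom σ ℕ)
  neg : List (Atom σ ℕ)

/-- A normal logic program: a (possibly infinite) set of rules. -/
abbrev Program (σ : Sig) : Type := Set (Rule σ)

/-- A Herbrand interpretation: a set of ground atoms. -/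
abbrev Interp (σ : Sig) : Type := Set (GroundAtom σ)

variable {σ : Sig} {V W : Type}

/-- Function and constant symbols occurring in a term. -/
def Term.funcs : Term σ V → Set σ.Func
  | .var _ => ∅
  | .app f ts => insert f (⋃ i, (ts i).funcs)

def Atom.funcs (a : Atom σ V) : Set σ.Func := ⋃ i, Term.funcs (a.args i)

def Rule.funcs (r : Rule σ) : Set σ.Func :=
  Atom.funcs r.head ∪ (⋃ a ∈ r.pos, Atom.funcs a) ∪ (⋃ a ∈ r.neg, Atom.funcs a)

/-- Function and constant symbols occurring in a program. -/
def Program.funcs (P : Program σ) : Set σ.Func := ⋃ r ∈ P, Rule.funcs r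

def Rule.preds (r : Rule σ) : Set σ.Pred :=
  {q | q = r.head.pred ∨ (∃ a ∈ r.pos, Atom.pred a = q) ∨ (∃ a ∈ r.neg, Atom.pred a = q)}

/-- Predicate symbols occurring in a program. -/
def Program.preds (P : Program σ) : Set σ.Pred := ⋃ r ∈ P, Rule.preds r

def Term.subst (s : V → GroundTerm σ) : Term σ V → GroundTerm σ
  | .var v => s v
  | .app f ts => .app f fun i => (ts i).subst s

def Atom.subst (s : V → GroundTerm σ) (a : Atom σ V) : GroundAtom σ :=
  ⟨a.pred, fun i => Term.subst s (a.args i)⟩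

/-- The Herbrand domain of a program: all ground terms built from the
function and constant symbols occurring in the program. -/
def Program.herbrand (P : Program σ) : Set (GroundTerm σ) :=
  {t | Term.funcs t ⊆ Program.funcs P}

structure GroundRule (σ : Sig) : Type where
  head : GroundAtom σ
  pos : List (GroundAtom σ)
  neg : List (GroundAtom σ)

def Rule.subst (s : ℕ → GroundTerm σ) (r : Rule σ) : GroundRule σ :=
  ⟨Atom.subst s r.head, r.pos.map (Atom.subst s), r.neg.map (Atom.subst s)⟩

/-- The ground instantiation of a program over its Herbrand domain. -/
def Program.groundInst (P : Program σ) : Set (GroundRule σ) :=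
  {g | ∃ r ∈ P, ∃ s : ℕ → GroundTerm σ, (∀ n, s n ∈ Program.herbrand P) ∧ g = Rule.subst s r}

/-- A definite ground rule: a head together with a positive body. -/
abbrev DefiniteRule (σ : Sig) : Type := GroundAtom σ × List (GroundAtom σ)

/-- The Gelfond–Lifschitz reduct `P^M`: delete every ground rule whose negative
body intersects `M`, and delete the negative literals of the remaining rules. -/
def reduct (P : Program σ) (M : Interp σ) : Set (DefiniteRule σ) :=
  {d | ∃ g ∈ Program.groundInst P, (∀ b ∈ g.neg, b ∉ M) ∧ d = (g.head, g.pos)}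

def IsDefiniteModel (R : Set (DefiniteRule σ)) (M : Interp σ) : Prop :=
  ∀ d ∈ R, (∀ b ∈ d.2, b ∈ M) → d.1 ∈ M

/-- The least Herbrand model of a definite ground program. -/
def leastModel (R : Set (DefiniteRule σ)) : Interp σ :=
  ⋂₀ {M | IsDefiniteModel R M}

/-- `M` is a stable model of `P` iff `M` is the least Herbrand model of `P^M`. -/
def IsStableModel (P : Program σ) (M : Interp σ) : Prop :=
  M = leastModel (reduct P M)

/-- A program is consistent if it has at least one stable model. -/
def Consistent (P : Program σ) : Prop := ∃ M, IsStableModel P M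

def Term.vars : Term σ V → Set V
  | .var v => {v}
  | .app _ ts => ⋃ i, (ts i).vars

def Atom.vars (a : Atom σ V) : Set V := ⋃ i, Term.vars (a.args i)

/-- First-order formulas (sentences when closed) over signature `σ`. -/
inductive Formula (σ : Sig) : Type
  | atom : Atom σ ℕ → Formula σ
  | fals : Formula σ
  | not : Formula σ → Formula σ
  | and : Formula σ → Formula σ → Formula σ
  | or : Formula σ → Formula σ → Formula σ
  | all : ℕ → Formula σ → Formula σ
  | ex : ℕ → Formula σ → Formula σ

def Formula.free : Formula σ → Set ℕ
  | .atom a => Atom.vars a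
  | .fals => ∅
  | .not φ => φ.free
  | .and φ ψ => φ.free ∪ ψ.free
  | .or φ ψ => φ.free ∪ ψ.free
  | .all x φ => φ.free \ {x}
  | .ex x φ => φ.free \ {x}

/-- A sentence is a closed formula. -/
def Formula.IsSentence (φ : Formula σ) : Prop := Formula.free φ = ∅

/-- Satisfaction of a formula in a Herbrand interpretation `M`, with quantifiers
ranging over the Herbrand domain `D`, under environment `e`. -/
def Formula.Sat (D : Set (GroundTerm σ)) (M : Interp σ) :
    Formula σ → (ℕ → GroundTerm σ) → Prop
  | .atom a, e => Atom.subst e a ∈ M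
  | .fals, _ => False
  | .not φ, e => ¬ Formula.Sat D M φ e
  | .and φ ψ, e => Formula.Sat D M φ e ∧ Formula.Sat D M ψ e
  | .or φ ψ, e => Formula.Sat D M φ e ∨ Formula.Sat D M ψ e
  | .all x φ, e => ∀ t ∈ D, Formula.Sat D M φ (Function.update e x t)
  | .ex x φ, e => ∃ t ∈ D, Formula.Sat D M φ (Function.update e x t)

/-- A (closed) formula holds in `M` w.r.t. domain `D`. -/
def Holds (D : Set (GroundTerm σ)) (M : Interp σ) (φ : Formula σ) : Prop :=
  ∀ e : ℕ → GroundTerm σ, Formula.Sat D M φ e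

/-- `P` credulously entails `φ`: `φ` holds in some stable model of `P`. -/
def CredulousEntails (P : Program σ) (φ : Formula σ) : Prop :=
  ∃ M, IsStableModel P M ∧ Holds (Program.herbrand P) M φ

/-- `P` skeptically entails `φ`: `φ` holds in every stable model of `P`. -/
def SkepticalEntails (P : Program σ) (φ : Formula σ) : Prop :=
  ∀ M, IsStableModel P M → Holds (Program.herbrand P) M φ

/-- `P'` is a completion of the open program `⟨P,F,O⟩`. -/
def IsCompletion (P : Program σ) (F : Set σ.Func) (O : Set σ.Pred) (P' : Program σ) : Prop :=
  P ⊆ P' ∧ Program.funcs P' ⊆ Program.funcs P ∪ F ∧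
    ∀ r ∈ P', r ∉ P → r.head.pred ∈ O

/-- Credulous open inference `⟨P,F,O⟩ ⊨crd φ`. -/
def OpenCrd (P : Program σ) (F : Set σ.Func) (O : Set σ.Pred) (φ : Formula σ) : Prop :=
  ∃ P', IsCompletion P F O P' ∧ CredulousEntails P' φ

/-- Skeptical open inference `⟨P,F,O⟩ ⊨skp φ`. -/
def OpenSkp (P : Program σ) (F : Set σ.Func) (O : Set σ.Pred) (φ : Formula σ) : Prop :=
  ∀ P', IsCompletion P F O P' → SkepticalEntails P' φ

/-- Mixed open inference I, `⟨P,F,O⟩ ⊨cs φ`. -/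
def OpenCS (P : Program σ) (F : Set σ.Func) (O : Set σ.Pred) (φ : Formula σ) : Prop :=
  ∃ P', IsCompletion P F O P' ∧ Consistent P' ∧ SkepticalEntails P' φ

/-- Mixed open inference II, `⟨P,F,O⟩ ⊨sc φ`. -/
def OpenSC (P : Program σ) (F : Set σ.Func) (O : Set σ.Pred) (φ : Formula σ) : Prop :=
  ∀ P', IsCompletion P F O P' → Consistent P' → CredulousEntails P' φ

def Term.mapVar (h : V → W) : Term σ V → Term σ W
  | .var v => .var (h v)
  | .app f ts => .app f fun i => (ts i).mapVar h

def Term.ofGround (t : GroundTerm σ) : Term σ ℕ := Term.mapVar Empty.elim t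

def Atom.ofGround (a : GroundAtom σ) : Atom σ ℕ :=
  ⟨a.pred, fun i => Term.ofGround (a.args i)⟩

/-- The ground fact (rule with empty body) corresponding to a ground atom. -/
def factOf (a : GroundAtom σ) : Rule σ := ⟨Atom.ofGround a, [], []⟩

def Rule.IsGroundFact (r : Rule σ) : Prop := ∃ a : GroundAtom σ, r = factOf a

def factsOf (E : Set (GroundAtom σ)) : Program σ := factOf '' E

/-- `Abducibles(T,A)`: all ground atoms over the Herbrand domain of `T`
whose predicate is abducible. -/
def Abducibles (T : Program σ) (A : Set σ.Pred) : Set (GroundAtom σ) :=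
  {a | a.pred ∈ A ∧ Atom.funcs a ⊆ Program.funcs T}

/-- Generalized stable model of an abduction framework `⟨T,A⟩`. -/
def IsGeneralizedStableModel (T : Program σ) (A : Set σ.Pred) (M : Interp σ) : Prop :=
  ∃ E ⊆ Abducibles T A, IsStableModel (T ∪ factsOf E) M

/-- `Abducibles^o(T,A)` w.r.t. skolem constants `Sk`. -/
def AbduciblesO (T : Program σ) (A : Set σ.Pred) (Sk : Set σ.Func) : Set (GroundAtom σ) :=
  {a | a.pred ∈ A ∧ Atom.funcs a ⊆ Program.funcs T ∪ Sk}

/-- Open generalized stable model of `⟨T,A⟩` w.r.t. skolem constants `Sk`. -/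
def IsOpenGeneralizedStableModel (T : Program σ) (A : Set σ.Pred) (Sk : Set σ.Func)
    (M : Interp σ) : Prop :=
  ∃ E ⊆ AbduciblesO T A Sk, IsStableModel (T ∪ factsOf E) M

end LP

/-!
Adding abduced facts to `T` is one way of completing it. Conversely, let `M` be stable for a
completion `P` of `T`, and let `E` be the set of heads of the instances of rules in `P \ T` that
fire in `M`. The facts `E` can replace the rules of `P \ T`: no stability is lost, since every
submodel of `M` that contains `E` satisfies those rules automatically. The heads of `P \ T` are
abducible and `P` has no new function symbols, so `E` is a legitimate abductive explanation.
-/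

namespace LP

variable {σ : Sig} {V W : Type}

section Definite

/-- The immediate consequence operator of van Emden and Kowalski: the heads of the rules in `R`
whose bodies hold in `M`. -/
def immediateConsequences (R : Set (DefiniteRule σ)) (M : Interp σ) : Interp σ :=
  {a | ∃ body, (a, body) ∈ R ∧ ∀ b ∈ body, b ∈ M}

/-- The definite program that asserts the atoms of `E`; it is the definite counterpart of
`factsOf`. -/
def definiteFacts (E : Set (GroundAtom σ)) : Set (DefiniteRule σ) := (·, []) '' E

variable {R S : Set (DefiniteRule σ)} {M : Interp σ}

theorem isDefiniteModel_iff_immediateConsequences_subset :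
    IsDefiniteModel R M ↔ immediateConsequences R M ⊆ M :=
  ⟨fun h a ⟨body, hR, hbody⟩ => h (a, body) hR hbody,
    fun h d hd hbody => h ⟨d.2, hd, hbody⟩⟩

theorem isDefiniteModel_union :
    IsDefiniteModel (R ∪ S) M ↔ IsDefiniteModel R M ∧ IsDefiniteModel S M := by
  simp only [IsDefiniteModel, Set.mem_union, or_imp, forall_and]

theorem isDefiniteModel_definiteFacts {E : Set (GroundAtom σ)} :
    IsDefiniteModel (definiteFacts E) M ↔ E ⊆ M := by
  simp [IsDefiniteModel, definiteFacts, Set.subset_def]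

theorem immediateConsequences_mono {N : Interp σ} (h : N ⊆ M) :
    immediateConsequences R N ⊆ immediateConsequences R M :=
  fun _ ⟨body, hR, hbody⟩ => ⟨body, hR, fun b hb => h (hbody b hb)⟩

theorem isDefiniteModel_leastModel (R : Set (DefiniteRule σ)) :
    IsDefiniteModel R (leastModel R) :=
  fun d hd hbody N hN => hN d hd fun b hb => hbody b hb N hN

theorem leastModel_subset (h : IsDefiniteModel R M) : leastModel R ⊆ M :=
  Set.sInter_subset_of_mem h

theorem leastModel_union_definiteFacts_immediateConsequences (R S : Set (DefiniteRule σ)) :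
    leastModel (R ∪ definiteFacts (immediateConsequences S (leastModel (R ∪ S)))) =
      leastModel (R ∪ S) := by
  set M := leastModel (R ∪ S)
  set N := leastModel (R ∪ definiteFacts (immediateConsequences S M))
  obtain ⟨hMR, hMS⟩ := isDefiniteModel_union.1 (isDefiniteModel_leastModel (R ∪ S))
  obtain ⟨hNR, hNfacts⟩ := isDefiniteModel_union.1
    (isDefiniteModel_leastModel (R ∪ definiteFacts (immediateConsequences S M)))
  have hNM : N ⊆ M := leastModel_subset <| isDefiniteModel_union.2
    ⟨hMR, isDefiniteModel_definiteFacts.2 (isDefiniteModel_iff_immediateConsequences_subset.1 hMS)⟩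
  have hNS : IsDefiniteModel S N := isDefiniteModel_iff_immediateConsequences_subset.2 <|
    (immediateConsequences_mono hNM).trans (isDefiniteModel_definiteFacts.1 hNfacts)
  exact hNM.antisymm (leastModel_subset (isDefiniteModel_union.2 ⟨hNR, hNS⟩))

end Definite

section SymbolsAndSubstitution

theorem Term.funcs_mapVar (h : V → W) (t : Term σ V) : (t.mapVar h).funcs = t.funcs := by
  induction t with
  | var v => rfl
  | app f ts ih => simp only [Term.mapVar, Term.funcs, ih]

theorem Atom.funcs_ofGround (a : GroundAtom σ) : (Atom.ofGround a).funcs = a.funcs := by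
  simp only [Atom.funcs, Atom.ofGround, Term.ofGround, Term.funcs_mapVar]

theorem Term.subst_ofGround (s : ℕ → GroundTerm σ) (t : GroundTerm σ) :
    (Term.ofGround t).subst s = t := by
  unfold Term.ofGround
  induction t with
  | var v => exact v.elim
  | app f ts ih => simp only [Term.mapVar, Term.subst, ih]

theorem Atom.subst_ofGround (s : ℕ → GroundTerm σ) (a : GroundAtom σ) :
    (Atom.ofGround a).subst s = a := by
  simp only [Atom.subst, Atom.ofGround, Term.subst_ofGround]

theorem Term.funcs_subst_subset {F : Set σ.Func} {s : V → GroundTerm σ}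
    (hs : ∀ v, (s v).funcs ⊆ F) {t : Term σ V} (ht : t.funcs ⊆ F) : (t.subst s).funcs ⊆ F := by
  induction t with
  | var v => exact hs v
  | app f ts ih =>
    simp only [Term.subst, Term.funcs, Set.insert_subset_iff, Set.iUnion_subset_iff] at ht ⊢
    exact ⟨ht.1, fun i => ih i (ht.2 i)⟩

theorem Atom.funcs_subst_subset {F : Set σ.Func} {s : V → GroundTerm σ}
    (hs : ∀ v, (s v).funcs ⊆ F) {a : Atom σ V} (ha : a.funcs ⊆ F) : (a.subst s).funcs ⊆ F := by
  simp only [Atom.funcs, Set.iUnion_subset_iff] at ha ⊢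
  exact fun i => Term.funcs_subst_subset hs (ha i)

theorem Rule.funcs_factOf (a : GroundAtom σ) : (factOf a).funcs = a.funcs := by
  simp [Rule.funcs, factOf, Atom.funcs_ofGround]

theorem Rule.funcs_head_subset (r : Rule σ) : r.head.funcs ⊆ r.funcs :=
  Set.subset_union_left.trans Set.subset_union_left

theorem Rule.funcs_subset_of_mem {P : Program σ} {r : Rule σ} (hr : r ∈ P) :
    r.funcs ⊆ Program.funcs P :=
  Set.subset_biUnion_of_mem hr

theorem Program.funcs_mono {P Q : Program σ} (h : P ⊆ Q) : Program.funcs P ⊆ Program.funcs Q :=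
  Set.biUnion_subset_biUnion_left h

theorem Program.funcs_union (P Q : Program σ) :
    Program.funcs (P ∪ Q) = Program.funcs P ∪ Program.funcs Q :=
  Set.biUnion_union P Q Rule.funcs

theorem Program.funcs_factsOf (E : Set (GroundAtom σ)) :
    Program.funcs (factsOf E) = ⋃ a ∈ E, a.funcs := by
  rw [Program.funcs, factsOf, Set.biUnion_image]
  simp only [Rule.funcs_factOf]

end SymbolsAndSubstitution

section Reduct

/-- The Gelfond–Lifschitz reduct of `P` by `M` with the rules instantiated over an arbitrary set
`D` of ground terms. For fixed `D` it is additive in `P`, which `reduct` is not, because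
the Herbrand domain varies with the program. -/
def reductOver (D : Set (GroundTerm σ)) (P : Program σ) (M : Interp σ) : Set (DefiniteRule σ) :=
  {d | ∃ r ∈ P, ∃ s : ℕ → GroundTerm σ, (∀ n, s n ∈ D) ∧
    (∀ b ∈ (r.subst s).neg, b ∉ M) ∧ d = ((r.subst s).head, (r.subst s).pos)}

theorem reduct_eq_reductOver (P : Program σ) (M : Interp σ) :
    reduct P M = reductOver (Program.herbrand P) P M := by
  ext d
  constructor
  · rintro ⟨_, ⟨r, hr, s, hs, rfl⟩, hneg, hd⟩
    exact ⟨r, hr, s, hs, hneg, hd⟩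
  · rintro ⟨r, hr, s, hs, hneg, hd⟩
    exact ⟨_, ⟨r, hr, s, hs, rfl⟩, hneg, hd⟩

theorem reductOver_union (D : Set (GroundTerm σ)) (P Q : Program σ) (M : Interp σ) :
    reductOver D (P ∪ Q) M = reductOver D P M ∪ reductOver D Q M := by
  simp only [reductOver, Set.mem_union, or_and_right, exists_or, Set.ofPred_or]

-- Over an empty domain even ground rules have no instances, since substitutions are total.
theorem reductOver_factsOf {D : Set (GroundTerm σ)} {E : Set (GroundAtom σ)}
    (hD : E.Nonempty → D.Nonempty) (M : Interp σ) :
    reductOver D (factsOf E) M = definiteFacts E := by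
  have instance_eq (a : GroundAtom σ) (s : ℕ → GroundTerm σ) :
      (factOf a).subst s = ⟨a, [], []⟩ := by
    simp only [Rule.subst, factOf, Atom.subst_ofGround, List.map_nil]
  ext d
  constructor
  · rintro ⟨_, ⟨a, ha, rfl⟩, s, -, -, rfl⟩
    exact ⟨a, ha, by rw [instance_eq]⟩
  · rintro ⟨a, ha, rfl⟩
    obtain ⟨t, ht⟩ := hD ⟨a, ha⟩
    refine ⟨factOf a, ⟨a, ha, rfl⟩, fun _ => t, fun _ => ht, ?_, ?_⟩ <;> simp [instance_eq]

end Reduct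

section Completion

variable {T P : Program σ} {F : Set σ.Func} {A : Set σ.Pred} {M : Interp σ}

theorem abduciblesO_empty (T : Program σ) (A : Set σ.Pred) :
    AbduciblesO T A ∅ = Abducibles T A := by
  simp only [AbduciblesO, Abducibles, Set.union_empty]

theorem isCompletion_union_factsOf {E : Set (GroundAtom σ)} (hE : E ⊆ AbduciblesO T A F) :
    IsCompletion T F A (T ∪ factsOf E) := by
  refine ⟨Set.subset_union_left, ?_, ?_⟩
  · rw [Program.funcs_union, Program.funcs_factsOf]
    exact Set.union_subset Set.subset_union_left (Set.iUnion₂_subset fun a ha => (hE ha).2)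
  · rintro r (hr | ⟨a, ha, rfl⟩) hrT
    · exact absurd hr hrT
    · exact (hE ha).1

theorem IsCompletion.herbrand_eq (h : IsCompletion T ∅ A P) :
    Program.herbrand P = Program.herbrand T := by
  have funcs_eq : Program.funcs P = Program.funcs T :=
    (h.2.1.trans_eq (Set.union_empty _)).antisymm (Program.funcs_mono h.1)
  simp only [Program.herbrand, funcs_eq]

/-- The atoms that `P` derives in `M` by one application of a rule outside `T`. They form the
abductive explanation extracted from a stable model `M` of a completion `P` of `T`. -/
def abducedAtoms (T P : Program σ) (M : Interp σ) : Set (GroundAtom σ) :=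
  immediateConsequences (reductOver (Program.herbrand P) (P \ T) M) M

theorem herbrand_nonempty_of_abducedAtoms_nonempty (h : (abducedAtoms T P M).Nonempty) :
    (Program.herbrand P).Nonempty :=
  let ⟨_, _, ⟨_, _, s, hs, _⟩, _⟩ := h
  ⟨s 0, hs 0⟩

theorem IsCompletion.abducedAtoms_subset (h : IsCompletion T F A P) (M : Interp σ) :
    abducedAtoms T P M ⊆ AbduciblesO T A F := by
  rintro _ ⟨_, ⟨r, ⟨hrP, hrT⟩, s, hs, -, ⟨⟩⟩, -⟩
  have funcs_head : r.head.funcs ⊆ Program.funcs P :=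
    r.funcs_head_subset.trans (Rule.funcs_subset_of_mem hrP)
  exact ⟨h.2.2 r hrP hrT, (Atom.funcs_subst_subset hs funcs_head).trans h.2.1⟩

theorem IsStableModel.union_factsOf_abducedAtoms (hM : IsStableModel P M) (hTP : T ⊆ P)
    (hD : Program.herbrand (T ∪ factsOf (abducedAtoms T P M)) = Program.herbrand P) :
    IsStableModel (T ∪ factsOf (abducedAtoms T P M)) M := by
  set D := Program.herbrand P
  have reduct_P : reduct P M = reductOver D T M ∪ reductOver D (P \ T) M := by
    rw [reduct_eq_reductOver, ← reductOver_union, Set.union_sdiff_cancel hTP]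
  have reduct_facts : reduct (T ∪ factsOf (abducedAtoms T P M)) M =
      reductOver D T M ∪ definiteFacts (abducedAtoms T P M) := by
    rw [reduct_eq_reductOver, hD, reductOver_union,
      reductOver_factsOf herbrand_nonempty_of_abducedAtoms_nonempty]
  have M_eq : M = leastModel (reductOver D T M ∪ reductOver D (P \ T) M) := reduct_P ▸ hM
  have key := leastModel_union_definiteFacts_immediateConsequences
    (reductOver D T M) (reductOver D (P \ T) M)
  rw [← M_eq] at key
  rw [IsStableModel, reduct_facts]
  exact key.symm

end Completion

/-- `M` is a generalized stable model of the abduction framework `⟨T,A⟩` iff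
`M` is a stable model of some completion of the open program `⟨T,∅,A⟩`. -/
theorem generalizedStableModel_iff_completion {σ : Sig} (T : Program σ)
    (A : Set σ.Pred) (M : Interp σ) :
    IsGeneralizedStableModel T A M ↔
      ∃ P, IsCompletion T ∅ A P ∧ IsStableModel P M := by
  simp only [IsGeneralizedStableModel, ← abduciblesO_empty]
  constructor
  · rintro ⟨E, hE, hM⟩
    exact ⟨T ∪ factsOf E, isCompletion_union_factsOf hE, hM⟩
  · rintro ⟨P, hP, hM⟩
    have hE : abducedAtoms T P M ⊆ AbduciblesO T A ∅ := hP.abducedAtoms_subset M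
    have hD : Program.herbrand (T ∪ factsOf (abducedAtoms T P M)) = Program.herbrand P :=
      (isCompletion_union_factsOf hE).herbrand_eq.trans hP.herbrand_eq.symm
    exact ⟨abducedAtoms T P M, hE, hM.union_factsOf_abducedAtoms hP.1 hD⟩

end LP
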